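/- arXiv:2506.16432 — 2 statements merged into one kernel-verified Lean document; each statement's English description precedes it below -/
import Mathlib

section
/- Every 3×3 complex matrix can be written as a product of at most 4 Toeplitz matrices, i.e., Toep₃ ≤ 4. -/
def IsToeplitz {n : ℕ} (M : Matrix (Fin n) (Fin n) ℂ) : Prop :=
  ∀ (i j : Fin n) (hi : (i : ℕ) + 1 < n) (hj : (j : ℕ) + 1 < n),
    M i j = M ⟨i + 1, hi⟩ ⟨j + 1, hj⟩

open Matrix

/-- A `3 × 3` matrix is Hankel if its antidiagonals are constant. -/
def IsHankel (H : Matrix (Fin 3) (Fin 3) ℂ) : Prop :=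
  H.IsSymm ∧ H 0 2 = H 1 1

theorem exists_quadratic_form_eq_zero (a b c : ℂ) :
    ∃ s t : ℂ, (s ≠ 0 ∨ t ≠ 0) ∧ a * s ^ 2 + b * (s * t) + c * t ^ 2 = 0 := by
  by_cases ha : a = 0
  · exact ⟨1, 0, by simp, by simp [ha]⟩
  · obtain ⟨x, hx⟩ := exists_quadratic_eq_zero (b := b) (c := c) ha
      (IsAlgClosed.exists_eq_mul_self _)
    exact ⟨x, 1, by simp, by linear_combination hx⟩

def symmMatrix : (Fin 6 → ℂ) →ₗ[ℂ] Matrix (Fin 3) (Fin 3) ℂ where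
  toFun x := !![x 0, x 1, x 2; x 1, x 3, x 4; x 2, x 4, x 5]
  map_add' x y := by ext i j; fin_cases i <;> fin_cases j <;> rfl
  map_smul' c x := by ext i j; fin_cases i <;> fin_cases j <;> rfl

theorem symmMatrix_isSymm (x : Fin 6 → ℂ) : (symmMatrix x).IsSymm := by
  ext i j; fin_cases i <;> fin_cases j <;> rfl

/-- The linear functionals whose common kernel consists of the Hankel matrices. -/
def hankelDefect : Matrix (Fin 3) (Fin 3) ℂ →ₗ[ℂ] (Fin 4 → ℂ) where
  toFun P := ![P 0 1 - P 1 0, P 0 2 - P 2 0, P 1 2 - P 2 1, P 0 2 - P 1 1]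
  map_add' P Q := by ext i; fin_cases i <;> simp <;> ring
  map_smul' c P := by ext i; fin_cases i <;> simp <;> ring

theorem isHankel_of_hankelDefect_eq_zero {P : Matrix (Fin 3) (Fin 3) ℂ}
    (h : hankelDefect P = 0) : IsHankel P := by
  have h0 : P 0 1 - P 1 0 = 0 := congrFun h 0
  have h1 : P 0 2 - P 2 0 = 0 := congrFun h 1
  have h2 : P 1 2 - P 2 1 = 0 := congrFun h 2
  have h3 : P 0 2 - P 1 1 = 0 := congrFun h 3
  rw [sub_eq_zero] at h0 h1 h2 h3
  refine ⟨?_, h3⟩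
  ext i j
  fin_cases i <;> fin_cases j <;> simp [*]

theorem exists_symmetrizer (A : Matrix (Fin 3) (Fin 3) ℂ) :
    ∃ S : Matrix (Fin 3) (Fin 3) ℂ, S ≠ 0 ∧ S.IsSymm ∧ IsHankel (S * A) ∧
      IsHankel S.adjugate := by
  let φ : (Fin 6 → ℂ) →ₗ[ℂ] (Fin 4 → ℂ) :=
    hankelDefect ∘ₗ LinearMap.mulRight ℂ A ∘ₗ symmMatrix
  have hdim : 1 < Module.finrank ℂ (LinearMap.ker φ) := by
    have h := LinearMap.finrank_range_add_finrank_ker φ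
    have h' := Submodule.finrank_le (LinearMap.range φ)
    simp only [Module.finrank_fin_fun] at h h'
    omega
  have : Nontrivial (LinearMap.ker φ) :=
    Module.nontrivial_of_finrank_pos (zero_lt_one.trans hdim)
  obtain ⟨x, hx⟩ := exists_ne (0 : LinearMap.ker φ)
  obtain ⟨y, hxy⟩ := exists_linearIndependent_pair_of_one_lt_finrank hdim hx
  rw [LinearIndependent.pair_iff] at hxy
  obtain ⟨x, hx0⟩ := x
  obtain ⟨y, hy0⟩ := y
  obtain ⟨s, t, hst, h⟩ := exists_quadratic_form_eq_zero
    (x 1 * x 4 - x 2 * x 3 - (x 0 * x 5 - x 2 ^ 2))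
    (x 1 * y 4 + y 1 * x 4 - x 2 * y 3 - y 2 * x 3 - (x 0 * y 5 + y 0 * x 5 - 2 * (x 2 * y 2)))
    (y 1 * y 4 - y 2 * y 3 - (y 0 * y 5 - y 2 ^ 2))
  have hz : s • x + t • y ∈ LinearMap.ker φ :=
    add_mem (Submodule.smul_mem _ _ hx0) (Submodule.smul_mem _ _ hy0)
  refine ⟨symmMatrix (s • x + t • y), ?_, symmMatrix_isSymm _,
    isHankel_of_hankelDefect_eq_zero hz, ?_, ?_⟩
  · intro h0
    have hv : s • x + t • y = 0 := by
      ext i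
      fin_cases i
      exacts [congrFun₂ h0 0 0, congrFun₂ h0 0 1, congrFun₂ h0 0 2, congrFun₂ h0 1 1,
        congrFun₂ h0 1 2, congrFun₂ h0 2 2]
    have := hxy s t (Subtype.ext hv)
    tauto
  · rw [Matrix.IsSymm, adjugate_transpose, symmMatrix_isSymm]
  · rw [adjugate_fin_three]
    simp [symmMatrix]
    linear_combination h

theorem exists_eq_smul_of_cross_eq_zero {v w : Fin 3 → ℂ} (hv : v ≠ 0) (h : v ⨯₃ w = 0) :
    ∃ c : ℂ, w = c • v := by
  by_contra! hc
  refine crossProduct_ne_zero_iff_linearIndependent.2 ?_ h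
  rw [LinearIndependent.pair_iff' hv]
  exact fun a ha => hc a ha.symm

/-- Columns of the adjugate of a symmetric matrix span its kernel. -/
theorem adjugate_col_cross_eq_zero {S : Matrix (Fin 3) (Fin 3) ℂ} (hS : S.IsSymm)
    {u : Fin 3 → ℂ} (hu : S *ᵥ u = 0) (k : Fin 3) : S.adjugate.col k ⨯₃ u = 0 := by
  have h0 := congrFun hu 0
  have h1 := congrFun hu 1
  have h2 := congrFun hu 2
  have e1 := hS.apply 0 1
  have e2 := hS.apply 0 2
  have e3 := hS.apply 1 2
  simp [mulVec, dotProduct, Fin.sum_univ_three] at h0 h1 h2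
  rw [cross_apply, adjugate_fin_three]
  ext i
  fin_cases k <;> fin_cases i <;> simp [e1, e2, e3] at h0 h1 h2 ⊢ <;> grind

theorem det_ne_zero_of_symmetrizer {A B S : Matrix (Fin 3) (Fin 3) ℂ} (hAB : A * B = 1)
    (hB : ∀ v : Fin 3 → ℂ, v ≠ 0 → v 0 * v 2 = v 1 ^ 2 → v ⨯₃ (B *ᵥ v) ≠ 0)
    (hA : ∀ v : Fin 3 → ℂ, v ≠ 0 → v 0 * v 2 = v 1 ^ 2 → v ⨯₃ (Aᵀ *ᵥ v) ≠ 0)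
    (hS0 : S ≠ 0) (hS : S.IsSymm) (hSA : IsHankel (S * A)) (hadj : IsHankel S.adjugate) :
    S.det ≠ 0 := by
  intro hdet
  have hSA' : S * A = Aᵀ * S := by
    have := hSA.1
    rw [Matrix.IsSymm, transpose_mul, hS] at this
    exact this.symm
  have e1 := hS.apply 0 1
  have e2 := hS.apply 0 2
  have e3 := hS.apply 1 2
  by_cases hadj0 : S.adjugate = 0
  · obtain ⟨k, hk⟩ : ∃ k, S k k ≠ 0 := by
      by_contra! hk
      have h := hadj0
      have k0 := hk 0
      have k1 := hk 1
      have k2 := hk 2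
      rw [adjugate_fin_three] at h
      have a0 := congrFun₂ h 0 0
      have a1 := congrFun₂ h 1 1
      have a2 := congrFun₂ h 2 2
      simp [k0, k1, k2, e1, e2, e3] at a0 a1 a2
      apply hS0
      ext i j
      fin_cases i <;> fin_cases j <;> simp [*]
    have hminor : ∀ i j, S k k * S i j = S k i * S k j := by
      have h := hadj0
      rw [adjugate_fin_three] at h
      have a0 := congrFun₂ h 0 0
      have a1 := congrFun₂ h 1 1
      have a2 := congrFun₂ h 2 2
      have a3 := congrFun₂ h 0 1
      have a4 := congrFun₂ h 0 2
      have a5 := congrFun₂ h 1 2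
      simp [e1, e2, e3] at a0 a1 a2 a3 a4 a5
      intro i j
      fin_cases k <;> fin_cases i <;> fin_cases j <;> simp [e1, e2, e3] <;> grind
    set w : Fin 3 → ℂ := S k with hw
    have hw0 : w ≠ 0 := fun h => hk (congrFun h k)
    have hz : ∀ i j, S k k * (S * A) i j = w i * (Aᵀ *ᵥ w) j := by
      intro i j
      simp only [mul_apply, mulVec, dotProduct, transpose_apply, Fin.sum_univ_three]
      linear_combination A 0 j * hminor i 0 + A 1 j * hminor i 1 + A 2 j * hminor i 2
    have hcomm : ∀ i j, w i * (Aᵀ *ᵥ w) j = w j * (Aᵀ *ᵥ w) i := by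
      intro i j
      rw [← hz, ← hz, hSA.1.apply]
    have hcross : w ⨯₃ (Aᵀ *ᵥ w) = 0 := by
      rw [cross_apply]
      ext i
      fin_cases i
      exacts [sub_eq_zero.2 (hcomm 1 2), sub_eq_zero.2 (hcomm 2 0), sub_eq_zero.2 (hcomm 0 1)]
    refine hA w hw0 ?_ hcross
    obtain ⟨c, hc⟩ := exists_eq_smul_of_cross_eq_zero hw0 hcross
    have hc0 : c ≠ 0 := by
      rintro rfl
      have : Bᵀ *ᵥ (Aᵀ *ᵥ w) = w := by
        rw [mulVec_mulVec, ← transpose_mul, hAB, transpose_one, one_mulVec]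
      rw [hc] at this
      simp at this
      exact hw0 this.symm
    have h02 := hz 0 2
    have h11 := hz 1 1
    rw [hSA.2, h11, hc] at h02
    simp only [Pi.smul_apply, smul_eq_mul] at h02
    apply mul_left_cancel₀ hc0
    linear_combination -h02
  · obtain ⟨k, hk⟩ : ∃ k, S.adjugate.col k ≠ 0 := by
      by_contra! hk
      exact hadj0 (by ext i j; exact congrFun (hk j) i)
    set v := S.adjugate.col k with hv
    have hSv : S *ᵥ v = 0 := by
      ext i
      have := congrFun₂ (mul_adjugate S) i k
      rw [hdet, zero_smul] at this
      exact this
    have hSB : S * B = Bᵀ * S := by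
      have hAB' : Bᵀ * Aᵀ = 1 := by rw [← transpose_mul, hAB, transpose_one]
      calc S * B = Bᵀ * (Aᵀ * S) * B := by rw [← Matrix.mul_assoc, hAB', Matrix.one_mul]
        _ = Bᵀ * S * (A * B) := by rw [← hSA']; simp only [Matrix.mul_assoc]
        _ = Bᵀ * S := by rw [hAB, Matrix.mul_one]
    refine hB v hk ?_ (adjugate_col_cross_eq_zero hS ?_ k)
    · have h := hadj.2
      have hd := hdet
      rw [det_fin_three] at hd
      rw [adjugate_fin_three] at h hv
      have v0 := congrFun hv 0
      have v1 := congrFun hv 1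
      have v2 := congrFun hv 2
      clear_value v
      fin_cases k <;> simp [e1, e2, e3] at h hd v0 v1 v2 <;> rw [v0, v1, v2] <;> grind
    · rw [mulVec_mulVec, hSB, ← mulVec_mulVec, hSv, mulVec_zero]

theorem exists_eq_mul_isHankel {A B : Matrix (Fin 3) (Fin 3) ℂ} (hAB : A * B = 1)
    (hB : ∀ v : Fin 3 → ℂ, v ≠ 0 → v 0 * v 2 = v 1 ^ 2 → v ⨯₃ (B *ᵥ v) ≠ 0)
    (hA : ∀ v : Fin 3 → ℂ, v ≠ 0 → v 0 * v 2 = v 1 ^ 2 → v ⨯₃ (Aᵀ *ᵥ v) ≠ 0) :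
    ∃ H K, IsHankel H ∧ IsHankel K ∧ A = H * K := by
  obtain ⟨S, hS0, hS, hSA, hadj⟩ := exists_symmetrizer A
  have hdet := det_ne_zero_of_symmetrizer hAB hB hA hS0 hS hSA hadj
  refine ⟨S.det⁻¹ • S.adjugate, S * A, ⟨hadj.1.smul _, ?_⟩, hSA, ?_⟩
  · simp [hadj.2]
  · rw [smul_mul, ← Matrix.mul_assoc, adjugate_mul, smul_mul, Matrix.one_mul, smul_smul,
      inv_mul_cancel₀ hdet, one_smul]

open Filter Polynomial in
theorem eventually_eval_ne_zero {p : ℂ[X]} (hp : p ≠ 0) : ∀ᶠ x in cofinite, p.eval x ≠ 0 := by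
  rw [eventually_cofinite]
  simpa [← IsRoot.def] using finite_setOfPred_isRoot hp

def hankelOf (h : Fin 5 → ℂ) : Matrix (Fin 3) (Fin 3) ℂ :=
  !![h 0, h 1, h 2; h 1, h 2, h 3; h 2, h 3, h 4]

theorem isHankel_hankelOf (h : Fin 5 → ℂ) : IsHankel (hankelOf h) := by
  refine ⟨?_, rfl⟩
  ext i j; fin_cases i <;> fin_cases j <;> rfl

/-- A curve of Hankel matrices whose entries are distinct monomials. -/
def hankelCurve (x : ℂ) : Matrix (Fin 3) (Fin 3) ℂ :=
  hankelOf ![x, x ^ 2, 1, x ^ 3, x ^ 4]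

open Filter Polynomial in
theorem eventually_det_hankelCurve_ne_zero : ∀ᶠ x in cofinite, (hankelCurve x).det ≠ 0 := by
  have hp : (X ^ 5 + 2 * X ^ 5 - 1 - X ^ 7 - X ^ 8 : ℂ[X]) ≠ 0 := by
    intro h
    simpa using congrArg (eval 0) h
  filter_upwards [eventually_eval_ne_zero hp] with x hx
  convert hx using 1
  simp [hankelCurve, hankelOf, det_fin_three]
  ring

open Filter Polynomial in
theorem eventually_dotProduct_hankelCurve_ne_zero {u g : Fin 3 → ℂ} (hu : u ≠ 0) (hg : g ≠ 0) :
    ∀ᶠ x in cofinite, u ⬝ᵥ (hankelCurve x *ᵥ g) ≠ 0 := by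
  have hp : (C (u 0 * g 0) * X + C (u 0 * g 1 + u 1 * g 0) * X ^ 2 +
      C (u 0 * g 2 + u 1 * g 1 + u 2 * g 0) + C (u 1 * g 2 + u 2 * g 1) * X ^ 3 +
      C (u 2 * g 2) * X ^ 4 : ℂ[X]) ≠ 0 := by
    intro h
    have h0 := congrArg (coeff · 0) h
    have h1 := congrArg (coeff · 1) h
    have h2 := congrArg (coeff · 2) h
    have h3 := congrArg (coeff · 3) h
    have h4 := congrArg (coeff · 4) h
    simp [coeff_X, coeff_C, coeff_X_pow, -map_mul, -map_add] at h0 h1 h2 h3 h4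
    have hu' : ¬ (u 0 = 0 ∧ u 1 = 0 ∧ u 2 = 0) := fun h => hu (by
      ext i; fin_cases i <;> simp [h])
    have hg' : ¬ (g 0 = 0 ∧ g 1 = 0 ∧ g 2 = 0) := fun h => hg (by
      ext i; fin_cases i <;> simp [h])
    grind
  filter_upwards [eventually_eval_ne_zero hp] with x hx
  convert hx using 1
  simp [hankelCurve, hankelOf, mulVec, dotProduct, Fin.sum_univ_three]
  ring

theorem exists_cross_ne_zero {f : Fin 3 → ℂ} (hf : f ≠ 0) : ∃ c, c ⨯₃ f ≠ 0 := by
  by_contra! h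
  apply hf
  have h0 := h ![1, 0, 0]
  have h1 := h ![0, 1, 0]
  rw [cross_apply] at h0 h1
  have a := congrFun h0 1
  have b := congrFun h0 2
  have c := congrFun h1 2
  simp at a b c
  ext i
  fin_cases i <;> simp [*]

open Filter in
theorem eventually_cross_hankelCurve_ne_zero {f g : Fin 3 → ℂ} (hf : f ≠ 0) (hg : g ≠ 0) :
    ∀ᶠ x in cofinite, f ⨯₃ (hankelCurve x *ᵥ g) ≠ 0 := by
  obtain ⟨c, hc⟩ := exists_cross_ne_zero hf
  filter_upwards [eventually_dotProduct_hankelCurve_ne_zero hc hg] with x hx h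
  apply hx
  rw [dotProduct_comm, triple_product_permutation, h, dotProduct_zero]

/-- The affine part of the conic `v 0 * v 2 = v 1 ^ 2`. -/
def conicPoint (t : ℂ) : Fin 3 → ℂ := ![1, t, t ^ 2]

theorem conicPoint_ne_zero (t : ℂ) : conicPoint t ≠ 0 := fun h => by
  simpa [conicPoint] using congrFun h 0

theorem exists_smul_conicPoint_or {v : Fin 3 → ℂ} (hv : v ≠ 0) (h : v 0 * v 2 = v 1 ^ 2) :
    ∃ c : ℂ, c ≠ 0 ∧ ((∃ t, v = c • conicPoint t) ∨ v = c • ![0, 0, 1]) := by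
  by_cases h0 : v 0 = 0
  · have h1 : v 1 = 0 := by simpa [h0] using h.symm
    refine ⟨v 2, fun h2 => hv ?_, Or.inr ?_⟩ <;> ext i <;> fin_cases i <;> simp [*]
  · refine ⟨v 0, h0, Or.inl ⟨v 1 / v 0, ?_⟩⟩
    ext i
    fin_cases i <;> simp [conicPoint] <;> field_simp
    linear_combination h

section
open Polynomial

theorem exists_polynomial_cross (F G H : Matrix (Fin 3) (Fin 3) ℂ) (k : Fin 3) :
    ∃ p : ℂ[X], ∀ t,
      ((F *ᵥ conicPoint t) ⨯₃ (H *ᵥ (G *ᵥ conicPoint t))) k = p.eval t := by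
  let v : Fin 3 → ℂ[X] := ![1, X, X ^ 2]
  refine ⟨((F.map C *ᵥ v) ⨯₃ (H.map C *ᵥ (G.map C *ᵥ v))) k, fun t => ?_⟩
  simp only [cross_apply]
  fin_cases k <;> simp [v, conicPoint, mulVec, dotProduct, Fin.sum_univ_three]

theorem exists_polynomial_mulVec (G : Matrix (Fin 3) (Fin 3) ℂ) (k : Fin 3) :
    ∃ p : ℂ[X], ∀ t, (G *ᵥ conicPoint t) k = p.eval t :=
  ⟨C (G k 0) + C (G k 1) * X + C (G k 2) * X ^ 2, fun t => by
    simp [conicPoint, mulVec, dotProduct, Fin.sum_univ_three]⟩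

theorem exists_polynomial_triple (F G H K : Matrix (Fin 3) (Fin 3) ℂ) :
    ∃ p : ℂ[X], ∀ t,
      ((F *ᵥ conicPoint t) ⨯₃ (H *ᵥ (G *ᵥ conicPoint t))) ⬝ᵥ (K *ᵥ (G *ᵥ conicPoint t)) =
        p.eval t := by
  choose p hp using exists_polynomial_cross F G H
  choose q hq using exists_polynomial_mulVec (K * G)
  refine ⟨∑ k, p k * q k, fun t => ?_⟩
  simp only [dotProduct, mulVec_mulVec] at hp hq ⊢
  simp [hp, hq, eval_finsetSum]

theorem finite_setOf_eq_zero_of_polynomial {φ : ℂ → ℂ} (hφ : ∃ p : ℂ[X], ∀ t, φ t = p.eval t)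
    (h0 : φ 0 ≠ 0) : {t | φ t = 0}.Finite := by
  obtain ⟨p, hp⟩ := hφ
  have hp0 : p ≠ 0 := by
    rintro rfl
    simp [hp] at h0
  simpa [hp, ← IsRoot.def] using finite_setOfPred_isRoot hp0

end

theorem finite_setOf_cross_eq_zero {F G H : Matrix (Fin 3) (Fin 3) ℂ}
    (h0 : (F *ᵥ conicPoint 0) ⨯₃ (H *ᵥ (G *ᵥ conicPoint 0)) ≠ 0) :
    {t | (F *ᵥ conicPoint t) ⨯₃ (H *ᵥ (G *ᵥ conicPoint t)) = 0}.Finite := by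
  obtain ⟨k, hk⟩ := Function.ne_iff.1 h0
  exact (finite_setOf_eq_zero_of_polynomial (exists_polynomial_cross F G H k) hk).subset
    fun t ht => congrFun ht k

open Filter in
theorem eventually_add_smul_ne_zero {P Q : Fin 3 → ℂ} (h : P ≠ 0 ∨ Q ≠ 0) :
    ∀ᶠ s : ℂ in cofinite, P + s • Q ≠ 0 := by
  rw [eventually_cofinite]
  refine Set.Subsingleton.finite fun s hs t ht => ?_
  simp only [not_not, Set.mem_ofPred_eq, ne_eq] at hs ht
  by_contra hst
  have hQ : (s - t) • Q = 0 := by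
    rw [sub_smul, sub_eq_zero]
    exact add_left_cancel (hs.trans ht.symm)
  rw [smul_eq_zero, sub_eq_zero] at hQ
  have hQ := hQ.resolve_left hst
  simp [hQ] at hs h
  exact h hs

open Filter Polynomial in
theorem eventually_det_add_smul_ne_zero {H K : Matrix (Fin 3) (Fin 3) ℂ} (hH : H.det ≠ 0) :
    ∀ᶠ s : ℂ in cofinite, (H + s • K).det ≠ 0 := by
  have hφ : ∃ p : ℂ[X], ∀ s, (H + s • K).det = p.eval s :=
    ⟨(H.map C + (X : ℂ[X]) • K.map C).det, fun s => by
      simp [det_fin_three, mul_comm s]⟩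
  exact eventually_cofinite.2
    (by simpa using finite_setOf_eq_zero_of_polynomial hφ (by simpa using hH))

open Filter in
/-- A generic Hankel matrix `H` moves `G v` off the line of `F v` for all `v` on the conic. -/
theorem exists_isHankel_cross_ne_zero {ι : Type*} [Finite ι]
    (F G : ι → Matrix (Fin 3) (Fin 3) ℂ)
    (hF : ∀ i v, v ≠ 0 → F i *ᵥ v ≠ 0) (hG : ∀ i v, v ≠ 0 → G i *ᵥ v ≠ 0) :
    ∃ H, IsHankel H ∧ H.det ≠ 0 ∧ ∀ i (v : Fin 3 → ℂ), v ≠ 0 → v 0 * v 2 = v 1 ^ 2 →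
      (F i *ᵥ v) ⨯₃ (H *ᵥ (G i *ᵥ v)) ≠ 0 := by
  have hFc i t := hF i _ (conicPoint_ne_zero t)
  have hGc i t := hG i _ (conicPoint_ne_zero t)
  have hinf : (![0, 0, 1] : Fin 3 → ℂ) ≠ 0 := fun h => by simpa using congrFun h 2
  obtain ⟨x, hxdet, hx⟩ := (eventually_det_hankelCurve_ne_zero.and (eventually_all.2 fun i =>
    eventually_cross_hankelCurve_ne_zero (hFc i 0) (hGc i 0))).exists
  set H₀ := hankelCurve x
  obtain ⟨y, hy0, hyfin, hyinf⟩ := ((eventually_all.2 fun i =>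
    eventually_dotProduct_hankelCurve_ne_zero (hx i) (hGc i 0)).and
    ((eventually_all.2 fun i => (eventually_all_finite (finite_setOf_cross_eq_zero (hx i))).2
      fun t _ => eventually_cross_hankelCurve_ne_zero (hFc i t) (hGc i t)).and
    (eventually_all.2 fun i =>
      eventually_cross_hankelCurve_ne_zero (hF i _ hinf) (hG i _ hinf)))).exists
  set H₁ := hankelCurve y
  have hcross (f g : Fin 3 → ℂ) (s : ℂ) :
      f ⨯₃ ((H₀ + s • H₁) *ᵥ g) = f ⨯₃ (H₀ *ᵥ g) + s • f ⨯₃ (H₁ *ᵥ g) := by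
    rw [add_mulVec, smul_mulVec, map_add, map_smul]
  obtain ⟨s, hsdet, hsfin, hsinf⟩ := ((eventually_det_add_smul_ne_zero (K := H₁) hxdet).and
    ((eventually_all.2 fun i => (eventually_all_finite (finite_setOf_eq_zero_of_polynomial
      (exists_polynomial_triple (F i) (G i) H₀ H₁) (hy0 i))).2
      fun t _ => eventually_add_smul_ne_zero (or_iff_not_imp_left.2 fun h =>
        hyfin i t (not_not.1 h))).and
    (eventually_all.2 fun i => eventually_add_smul_ne_zero
      (P := (F i *ᵥ ![0, 0, 1]) ⨯₃ (H₀ *ᵥ (G i *ᵥ ![0, 0, 1]))) (Or.inr (hyinf i))))).exists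
  refine ⟨H₀ + s • H₁, ⟨?_, ?_⟩, hsdet, fun i v hv hconic => ?_⟩
  · exact (isHankel_hankelOf _).1.add ((isHankel_hankelOf _).1.smul s)
  · simp [H₀, H₁, hankelCurve, (isHankel_hankelOf _).2]
  · obtain ⟨c, hc, ⟨t, rfl⟩ | rfl⟩ := exists_smul_conicPoint_or hv hconic
    · simp only [mulVec_smul, map_smul, LinearMap.smul_apply]
      refine smul_ne_zero hc (smul_ne_zero hc ?_)
      rw [hcross]
      by_cases ht : ((F i *ᵥ conicPoint t) ⨯₃ (H₀ *ᵥ (G i *ᵥ conicPoint t))) ⬝ᵥ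
          (H₁ *ᵥ (G i *ᵥ conicPoint t)) = 0
      · exact hsfin i t ht
      · intro h
        apply ht
        have h' := congrArg (· ⬝ᵥ (H₁ *ᵥ (G i *ᵥ conicPoint t))) h
        have h₁ : ((F i *ᵥ conicPoint t) ⨯₃ (H₁ *ᵥ (G i *ᵥ conicPoint t))) ⬝ᵥ
            (H₁ *ᵥ (G i *ᵥ conicPoint t)) = 0 := by
          rw [dotProduct_comm, dot_cross_self]
        simpa only [add_dotProduct, smul_dotProduct, h₁, smul_zero, add_zero,
          zero_dotProduct] using h'
    · simp only [mulVec_smul, map_smul, LinearMap.smul_apply]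
      refine smul_ne_zero hc (smul_ne_zero hc ?_)
      rw [hcross]
      exact hsinf i

theorem mulVec_ne_zero_of_mul_eq_one {M N : Matrix (Fin 3) (Fin 3) ℂ} (h : N * M = 1)
    {v : Fin 3 → ℂ} (hv : v ≠ 0) : M *ᵥ v ≠ 0 := fun h0 => hv <| by
  rw [← one_mulVec v, ← h, ← mulVec_mulVec, h0, mulVec_zero]

theorem exists_eq_mul_mul_isHankel {M : Matrix (Fin 3) (Fin 3) ℂ} (hM : M.det ≠ 0) :
    ∃ H₁ H₂ H₃, IsHankel H₁ ∧ IsHankel H₂ ∧ IsHankel H₃ ∧ M = H₁ * H₂ * H₃ := by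
  have hM' : IsUnit M.det := hM.isUnit
  have hMT : M⁻¹ᵀ * Mᵀ = 1 := by rw [← transpose_mul, mul_nonsing_inv _ hM', transpose_one]
  obtain ⟨H, hH, hdet, hgen⟩ := exists_isHankel_cross_ne_zero ![1, Mᵀ] ![M⁻¹, 1]
    (by
      intro i v hv
      fin_cases i
      · simpa using hv
      · exact mulVec_ne_zero_of_mul_eq_one hMT hv)
    (by
      intro i v hv
      fin_cases i
      · exact mulVec_ne_zero_of_mul_eq_one (mul_nonsing_inv _ hM') hv
      · simpa using hv)
  have hH' : IsUnit H.det := hdet.isUnit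
  have hinv : M * H⁻¹ * (H * M⁻¹) = 1 := by
    rw [Matrix.mul_assoc, nonsing_inv_mul_cancel_left _ _ hH', mul_nonsing_inv _ hM']
  obtain ⟨H₁, H₂, h₁, h₂, h⟩ := exists_eq_mul_isHankel hinv
    (by
      intro v hv hc
      simpa using hgen 0 v hv hc)
    (by
      intro v hv hc h0
      refine hgen 1 v hv hc ?_
      obtain ⟨c, h⟩ := exists_eq_smul_of_cross_eq_zero hv h0
      have : Mᵀ *ᵥ v = c • (H *ᵥ v) := by
        rw [← mulVec_smul, ← h, mulVec_mulVec, transpose_mul, transpose_nonsing_inv, hH.1,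
          mul_nonsing_inv_cancel_left _ _ hH']
      simp [this])
  refine ⟨H₁, H₂, H, h₁, h₂, hH, ?_⟩
  rw [← h, nonsing_inv_mul_cancel_right _ _ hH']

/-- The exchange matrix; multiplication by it swaps Hankel and Toeplitz matrices. -/
def exchange : Matrix (Fin 3) (Fin 3) ℂ := !![0, 0, 1; 0, 1, 0; 1, 0, 0]

theorem exchange_mul_exchange : exchange * exchange = 1 := by
  ext i j
  fin_cases i <;> fin_cases j <;> simp [exchange, mul_apply, Fin.sum_univ_three]

theorem isToeplitz_fin_three_iff {T : Matrix (Fin 3) (Fin 3) ℂ} :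
    IsToeplitz T ↔ T 0 0 = T 1 1 ∧ T 0 1 = T 1 2 ∧ T 1 0 = T 2 1 ∧ T 1 1 = T 2 2 := by
  constructor
  · intro h
    exact ⟨h 0 0 (by decide) (by decide), h 0 1 (by decide) (by decide),
      h 1 0 (by decide) (by decide), h 1 1 (by decide) (by decide)⟩
  · rintro ⟨h0, h1, h2, h3⟩ i j hi hj
    fin_cases i <;> fin_cases j <;> simp at hi hj <;> assumption

theorem IsHankel.isToeplitz_mul_exchange {H : Matrix (Fin 3) (Fin 3) ℂ} (h : IsHankel H) :
    IsToeplitz (H * exchange) := by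
  rw [isToeplitz_fin_three_iff]
  have h0 := h.1.apply 0 1
  have h1 := h.1.apply 0 2
  have h2 := h.1.apply 1 2
  have h3 := h.2
  simp [exchange, mul_apply, Fin.sum_univ_three, *]

theorem IsHankel.isToeplitz_exchange_mul {H : Matrix (Fin 3) (Fin 3) ℂ} (h : IsHankel H) :
    IsToeplitz (exchange * H) := by
  rw [isToeplitz_fin_three_iff]
  have h0 := h.1.apply 0 1
  have h1 := h.1.apply 0 2
  have h2 := h.1.apply 1 2
  have h3 := h.2
  simp [exchange, mul_apply, Fin.sum_univ_three, *]

theorem exists_eq_mul_mul_isToeplitz_of_det_ne_zero {M : Matrix (Fin 3) (Fin 3) ℂ}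
    (hM : M.det ≠ 0) :
    ∃ T₁ T₂ T₃, IsToeplitz T₁ ∧ IsToeplitz T₂ ∧ IsToeplitz T₃ ∧ M = T₁ * T₂ * T₃ := by
  have hdet : (M * exchange).det ≠ 0 := by
    rw [det_mul]
    refine mul_ne_zero hM fun h => ?_
    simpa [h] using congrArg det exchange_mul_exchange
  obtain ⟨H₁, H₂, H₃, h₁, h₂, h₃, h⟩ := exists_eq_mul_mul_isHankel hdet
  refine ⟨H₁ * exchange, exchange * H₂, H₃ * exchange, h₁.isToeplitz_mul_exchange,
    h₂.isToeplitz_exchange_mul, h₃.isToeplitz_mul_exchange, ?_⟩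
  calc
    M = M * exchange * exchange := by
      rw [Matrix.mul_assoc, exchange_mul_exchange, Matrix.mul_one]
    _ = H₁ * (exchange * exchange) * H₂ * (H₃ * exchange) := by
      rw [h, exchange_mul_exchange, Matrix.mul_one, Matrix.mul_assoc]
    _ = _ := by simp only [Matrix.mul_assoc]

theorem exists_eq_mul_mul_isToeplitz_of_adjugate_eq_zero {M : Matrix (Fin 3) (Fin 3) ℂ}
    (hM : M.adjugate = 0) :
    ∃ T₁ T₂ T₃, IsToeplitz T₁ ∧ IsToeplitz T₂ ∧ IsToeplitz T₃ ∧ M = T₁ * T₂ * T₃ := by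
  by_cases h0 : M = 0
  · have hz : IsToeplitz (0 : Matrix (Fin 3) (Fin 3) ℂ) := fun _ _ _ _ => rfl
    exact ⟨0, 0, 0, hz, hz, hz, by simp [h0]⟩
  obtain ⟨a, b, hab⟩ : ∃ a b, M a b ≠ 0 := by
    by_contra! h
    exact h0 (by ext i j; exact h i j)
  have hminor : ∀ i j, M a b * M i j = M i b * M a j := by
    rw [adjugate_fin_three] at hM
    have a00 := congrFun₂ hM 0 0
    have a01 := congrFun₂ hM 0 1
    have a02 := congrFun₂ hM 0 2
    have a10 := congrFun₂ hM 1 0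
    have a11 := congrFun₂ hM 1 1
    have a12 := congrFun₂ hM 1 2
    have a20 := congrFun₂ hM 2 0
    have a21 := congrFun₂ hM 2 1
    have a22 := congrFun₂ hM 2 2
    simp at a00 a01 a02 a10 a11 a12 a20 a21 a22
    clear h0 hab hM
    intro i j
    fin_cases a <;> fin_cases b <;> fin_cases i <;> fin_cases j <;> simp <;> grind
  refine ⟨!![M 0 b, 0, 0; M 1 b, M 0 b, 0; M 2 b, M 1 b, M 0 b], !![0, 0, 1; 0, 0, 0; 0, 0, 0],
    (M a b)⁻¹ • !![M a 2, 0, 0; M a 1, M a 2, 0; M a 0, M a 1, M a 2], ?_, ?_, ?_, ?_⟩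
  · simp [isToeplitz_fin_three_iff]
  · simp [isToeplitz_fin_three_iff]
  · simp [isToeplitz_fin_three_iff]
  · ext i j
    apply mul_left_cancel₀ hab
    rw [hminor]
    fin_cases i <;> fin_cases j <;> simp [mul_apply, Fin.sum_univ_three] <;> field_simp

/-- The rank-one update at a nonzero cofactor makes a singular matrix invertible. -/
theorem det_add_single_ne_zero {M : Matrix (Fin 3) (Fin 3) ℂ} (hM : M.det = 0) {i j : Fin 3}
    (h : M.adjugate i j ≠ 0) : (M + single j i 1).det ≠ 0 := by
  convert h using 1
  rw [adjugate_fin_three]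
  rw [det_fin_three] at hM ⊢
  fin_cases i <;> fin_cases j <;> simp [single] <;> linear_combination hM

theorem eq_add_single_mul {M : Matrix (Fin 3) (Fin 3) ℂ} {k : Fin 3 → ℂ} {i : Fin 3} (j : Fin 3)
    (hk : M *ᵥ k = 0) (hi : k i = 1) :
    M = (M + single j i 1) * (1 - vecMulVec k (Pi.single i 1)) := by
  rw [single_eq_single_vecMulVec_single, Matrix.mul_sub, Matrix.mul_one, Matrix.add_mul,
    mul_vecMulVec, hk, vecMulVec_mul_vecMulVec]
  simp [hi]

/-- A nonzero vector spans the kernel of some Toeplitz matrix of rank two. -/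
theorem exists_isToeplitz_mulVec_eq_zero {k : Fin 3 → ℂ} (hk : k ≠ 0) :
    ∃ T, IsToeplitz T ∧ T *ᵥ k = 0 ∧ ∃ i j, k i ≠ 0 ∧ T.adjugate i j ≠ 0 := by
  have hk' : k 0 ≠ 0 ∨ k 2 ≠ 0 ∨ (k 0 = 0 ∧ k 2 = 0 ∧ k 1 ≠ 0) := by
    by_contra! h
    apply hk
    ext i
    fin_cases i <;> simp <;> grind
  rcases hk' with h | h | ⟨h0, h2, h1⟩
  · refine ⟨!![-(k 1 / k 0), 1, 0; (k 1 / k 0) ^ 2 - k 2 / k 0, -(k 1 / k 0), 1;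
      -(k 1 / k 0) * ((k 1 / k 0) ^ 2 - k 2 / k 0) + k 2 / k 0 * (k 1 / k 0),
      (k 1 / k 0) ^ 2 - k 2 / k 0, -(k 1 / k 0)], ?_, ?_, 0, 2, h, ?_⟩
    · simp [isToeplitz_fin_three_iff]
    · ext i
      fin_cases i <;> simp [mulVec, dotProduct, Fin.sum_univ_three] <;> field_simp <;> ring
    · simp [adjugate_fin_three]
  · refine ⟨!![-(k 1 / k 2), (k 1 / k 2) ^ 2 - k 0 / k 2,
      -(k 1 / k 2) * ((k 1 / k 2) ^ 2 - k 0 / k 2) + k 0 / k 2 * (k 1 / k 2);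
      1, -(k 1 / k 2), (k 1 / k 2) ^ 2 - k 0 / k 2; 0, 1, -(k 1 / k 2)], ?_, ?_, 2, 0, h, ?_⟩
    · simp [isToeplitz_fin_three_iff]
    · ext i
      fin_cases i <;> simp [mulVec, dotProduct, Fin.sum_univ_three] <;> field_simp <;> ring
    · simp [adjugate_fin_three]
  · refine ⟨!![0, 0, 1; 0, 0, 0; 1, 0, 0], ?_, ?_, 1, 1, h1, ?_⟩
    · simp [isToeplitz_fin_three_iff]
    · ext i
      fin_cases i <;> simp [mulVec, dotProduct, Fin.sum_univ_three, h0, h2]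
    · simp [adjugate_fin_three]

theorem exists_eq_mul_isToeplitz_of_adjugate_ne_zero {M : Matrix (Fin 3) (Fin 3) ℂ}
    (hM : M.det = 0) (hadj : M.adjugate ≠ 0) :
    ∃ P T, P.det ≠ 0 ∧ IsToeplitz T ∧ M = P * T := by
  obtain ⟨j, hj⟩ : ∃ j, M.adjugate.col j ≠ 0 := by
    by_contra! h
    exact hadj (by ext i j; exact congrFun (h j) i)
  have hMk : M *ᵥ M.adjugate.col j = 0 := by
    ext i
    have := congrFun₂ (mul_adjugate M) i j
    rwa [hM, zero_smul] at this
  obtain ⟨T, hT, hTk, i, j', hi, hadjT⟩ := exists_isToeplitz_mulVec_eq_zero hj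
  set k := (M.adjugate.col j i)⁻¹ • M.adjugate.col j with hk
  have hki : k i = 1 := inv_mul_cancel₀ hi
  have hMk' : M *ᵥ k = 0 := by rw [mulVec_smul, hMk, smul_zero]
  have hTk' : T *ᵥ k = 0 := by rw [mulVec_smul, hTk, smul_zero]
  have hTdet : T.det = 0 := by
    by_contra h
    exact mulVec_ne_zero_of_mul_eq_one (nonsing_inv_mul T (Ne.isUnit h)) hj hTk
  have hR := det_add_single_ne_zero hTdet hadjT
  refine ⟨(M + single j i 1) * (T + single j' i 1)⁻¹, T, ?_, hT, ?_⟩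
  · rw [det_mul, det_nonsing_inv, Ring.inverse_eq_inv']
    exact mul_ne_zero (det_add_single_ne_zero hM hi) (inv_ne_zero hR)
  · have hT' := eq_add_single_mul j' hTk' hki
    calc M = (M + single j i 1) * (1 - vecMulVec k (Pi.single i 1)) :=
          eq_add_single_mul j hMk' hki
      _ = (M + single j i 1) * ((T + single j' i 1)⁻¹ *
          ((T + single j' i 1) * (1 - vecMulVec k (Pi.single i 1)))) := by
        rw [nonsing_inv_mul_cancel_left _ _ hR.isUnit]
      _ = _ := by rw [← hT', Matrix.mul_assoc]

theorem toep3_le_four (M : Matrix (Fin 3) (Fin 3) ℂ) :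
    ∃ L : List (Matrix (Fin 3) (Fin 3) ℂ),
      L.length ≤ 4 ∧ (∀ T ∈ L, IsToeplitz T) ∧ L.prod = M := by
  by_cases hdet : M.det = 0
  · by_cases hadj : M.adjugate = 0
    · obtain ⟨T₁, T₂, T₃, h₁, h₂, h₃, rfl⟩ :=
        exists_eq_mul_mul_isToeplitz_of_adjugate_eq_zero hadj
      exact ⟨[T₁, T₂, T₃], by simp, by simp [h₁, h₂, h₃], by simp [Matrix.mul_assoc]⟩
    · obtain ⟨P, T, hP, hT, rfl⟩ := exists_eq_mul_isToeplitz_of_adjugate_ne_zero hdet hadj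
      obtain ⟨T₁, T₂, T₃, h₁, h₂, h₃, rfl⟩ := exists_eq_mul_mul_isToeplitz_of_det_ne_zero hP
      exact ⟨[T₁, T₂, T₃, T], by simp, by simp [h₁, h₂, h₃, hT], by simp [Matrix.mul_assoc]⟩
  · obtain ⟨T₁, T₂, T₃, h₁, h₂, h₃, rfl⟩ := exists_eq_mul_mul_isToeplitz_of_det_ne_zero hdet
    exact ⟨[T₁, T₂, T₃], by simp, by simp [h₁, h₂, h₃], by simp [Matrix.mul_assoc]⟩
end

section
/- If M ∈ ℂ^{n×n} has rank n−1, then Toep(M) ≤ 2⌊n/2⌋ + 4. -/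
noncomputable def ToepNum {n : ℕ} (M : Matrix (Fin n) (Fin n) ℂ) : ℕ :=
  sInf {s | ∃ L : List (Matrix (Fin n) (Fin n) ℂ),
    L.length = s ∧ (∀ T ∈ L, IsToeplitz T) ∧ L.prod = M}

namespace IsToeplitz

variable {n : ℕ}

theorem add {A B : Matrix (Fin n) (Fin n) ℂ} (hA : IsToeplitz A) (hB : IsToeplitz B) :
    IsToeplitz (A + B) := fun i j hi hj => by
  rw [Matrix.add_apply, Matrix.add_apply, hA i j hi hj, hB i j hi hj]

theorem one : IsToeplitz (1 : Matrix (Fin n) (Fin n) ℂ) := fun i j hi hj => by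
  simp [Matrix.one_apply, Fin.ext_iff]

theorem single_last_zero {m : ℕ} (c : ℂ) : IsToeplitz (Matrix.single (Fin.last m) 0 c) :=
  fun i j hi hj => by
    rw [Matrix.single_apply_of_ne, Matrix.single_apply_of_ne]
    · simp only [Fin.ext_iff, Fin.val_zero]; omega
    · simp only [Fin.ext_iff, Fin.val_last]; omega

theorem single_zero_last {m : ℕ} (c : ℂ) : IsToeplitz (Matrix.single 0 (Fin.last m) c) :=
  fun i j hi hj => by
    rw [Matrix.single_apply_of_ne, Matrix.single_apply_of_ne]
    · simp only [Fin.ext_iff, Fin.val_zero]; omega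
    · simp only [Fin.ext_iff, Fin.val_last]; omega

theorem permMatrix_addRight {m : ℕ} (k : Fin (m + 1)) :
    IsToeplitz ((Equiv.addRight k).permMatrix ℂ) := fun i j hi hj => by
  have hi' : (⟨i + 1, hi⟩ : Fin (m + 1)) = i + 1 := by
    rw [Fin.ext_iff, Fin.val_add_one_of_lt (Fin.lt_def.2 (by simp; omega))]
  have hj' : (⟨j + 1, hj⟩ : Fin (m + 1)) = j + 1 := by
    rw [Fin.ext_iff, Fin.val_add_one_of_lt (Fin.lt_def.2 (by simp; omega))]
  rw [hi', hj']
  have : i + 1 + k = j + 1 ↔ i + k = j := by rw [add_right_comm, add_left_inj]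
  simp [Equiv.Perm.permMatrix, PEquiv.toMatrix_apply, this]

end IsToeplitz

/-- The multiplicative monoid of all products of Toeplitz matrices. -/
def toeplitzProducts (n : ℕ) : Submonoid (Matrix (Fin n) (Fin n) ℂ) :=
  Submonoid.closure {T | IsToeplitz T}

namespace toeplitzProducts

open Matrix

theorem of_isToeplitz {n : ℕ} {T : Matrix (Fin n) (Fin n) ℂ} (hT : IsToeplitz T) :
    T ∈ toeplitzProducts n := Submonoid.subset_closure hT

variable {m : ℕ}

theorem conj_shift {i j : Fin (m + 1)} {c : ℂ} (k : Fin (m + 1))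
    (h : 1 + single i j c ∈ toeplitzProducts (m + 1)) :
    1 + single (i - k) (j - k) c ∈ toeplitzProducts (m + 1) := by
  have h1 := of_isToeplitz (IsToeplitz.permMatrix_addRight k)
  have h2 := of_isToeplitz (IsToeplitz.permMatrix_addRight (-k))
  have h3 := mul_mem (mul_mem h1 h) h2
  convert h3 using 1
  ext a b
  simp only [Equiv.Perm.permMatrix, PEquiv.toMatrix_toPEquiv_mul, PEquiv.mul_toMatrix_toPEquiv,
    submatrix_apply, Matrix.add_apply, one_apply, single_apply, id]
  simp [sub_eq_iff_eq_add]

theorem one_add_single_succ (i : Fin (m + 1)) (c : ℂ) :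
    1 + single i (i + 1) c ∈ toeplitzProducts (m + 1) := by
  have h := conj_shift (Fin.last m - i)
    (of_isToeplitz (IsToeplitz.one.add (IsToeplitz.single_last_zero c)))
  have h0 : (0 : Fin (m + 1)) = Fin.last m + 1 := by simp
  convert h using 3
  · abel
  · rw [h0]; abel

theorem one_add_single_self (i : Fin (m + 1)) (c : ℂ) :
    1 + single i i c ∈ toeplitzProducts (m + 1) := by
  have h1 := of_isToeplitz (IsToeplitz.permMatrix_addRight (1 : Fin (m + 1)))
  have h2 := of_isToeplitz ((IsToeplitz.permMatrix_addRight (-1 : Fin (m + 1))).add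
    (IsToeplitz.single_zero_last c))
  have h3 : 1 + single (Fin.last m) (Fin.last m) c ∈ toeplitzProducts (m + 1) := by
    convert mul_mem h1 h2 using 1
    ext a b
    have : 0 = a + 1 ↔ a = Fin.last m := by
      rw [← Fin.last_add_one m, add_left_inj, eq_comm]
    simp only [Equiv.Perm.permMatrix, PEquiv.toMatrix_toPEquiv_mul,
      submatrix_apply, Matrix.add_apply, one_apply, single_apply, id, PEquiv.toMatrix_apply]
    simp [this, @eq_comm _ (Fin.last m)]
  simpa using conj_shift (Fin.last m - i) h3

theorem one_add_single_commutator {ι K : Type*} [Fintype ι] [DecidableEq ι] [CommRing K]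
    {i j l : ι}
    (hij : i ≠ j) (hjl : j ≠ l) (hil : i ≠ l) (c : K) :
    (1 + single i j c) * (1 + single j l 1) * (1 + single i j (-c)) * (1 + single j l (-1)) =
      1 + single i l c := by
  simp only [add_mul, mul_add, one_mul, mul_one, single_mul_single_same,
    single_mul_single_of_ne _ _ _ _ hij.symm, single_mul_single_of_ne _ _ _ _ hjl.symm,
    single_mul_single_of_ne _ _ _ _ hil.symm, zero_mul]
  simp only [mul_one, mul_neg, neg_neg, ← single_neg]
  abel

theorem one_add_single_add {d : Fin (m + 1)} (hd : d ≠ 0) (i : Fin (m + 1)) (c : ℂ) :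
    1 + single i (i + d) c ∈ toeplitzProducts (m + 1) := by
  induction d using Fin.induction generalizing c with
  | zero => exact absurd rfl hd
  | succ d ih =>
    have h1 : d.castSucc ≠ d.castSucc + 1 := by
      rw [Fin.coeSucc_eq_succ]; exact Fin.castSucc_lt_succ.ne
    rw [← Fin.coeSucc_eq_succ] at hd ⊢
    by_cases h0 : d.castSucc = 0
    · rw [h0, zero_add]
      exact one_add_single_succ i c
    · rw [← add_assoc, ← one_add_single_commutator (j := i + d.castSucc)
        (by rwa [Ne, left_eq_add]) (by rwa [add_assoc, Ne, add_right_inj])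
        (by rwa [add_assoc, Ne, left_eq_add])]
      exact mul_mem (mul_mem (mul_mem (ih h0 _) (one_add_single_succ _ _)) (ih h0 _))
        (one_add_single_succ _ _)

theorem transvection_mem {i j : Fin (m + 1)} (hij : i ≠ j) (c : ℂ) :
    transvection i j c ∈ toeplitzProducts (m + 1) := by
  have h := one_add_single_add (sub_ne_zero.2 hij.symm) i c
  rwa [add_sub_cancel] at h

theorem diagonal_mem (d : Fin (m + 1) → ℂ) : diagonal d ∈ toeplitzProducts (m + 1) := by
  let S := (toeplitzProducts (m + 1)).comap (diagonalRingHom (Fin (m + 1)) ℂ)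
  suffices d ∈ S from this
  rw [← Finset.univ_prod_mulSingle d]
  refine prod_mem fun i _ => ?_
  change diagonal (Pi.mulSingle i (d i)) ∈ toeplitzProducts (m + 1)
  convert one_add_single_self i (d i - 1) using 1
  ext a b
  by_cases hab : a = b
  · subst hab
    by_cases hai : a = i
    · subst hai; simp
    · simp [hai, Ne.symm hai]
  · rw [diagonal_apply_ne _ hab, Matrix.add_apply, one_apply_ne hab, single_apply_of_ne, add_zero]
    rintro ⟨rfl, rfl⟩
    exact hab rfl

theorem mem {n : ℕ} (M : Matrix (Fin n) (Fin n) ℂ) : M ∈ toeplitzProducts n := by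
  cases n with
  | zero => rw [Subsingleton.elim M 1]; exact one_mem _
  | succ m =>
    exact diagonal_transvection_induction (· ∈ toeplitzProducts (m + 1)) M
      (fun D _ => diagonal_mem D) (fun t => transvection_mem t.hij t.c) (fun _ _ => mul_mem)

end toeplitzProducts

theorem exists_toeplitz_list_length_eq_toepNum {n : ℕ} (M : Matrix (Fin n) (Fin n) ℂ) :
    ∃ L : List (Matrix (Fin n) (Fin n) ℂ),
      L.length = ToepNum M ∧ (∀ T ∈ L, IsToeplitz T) ∧ L.prod = M := by
  obtain ⟨L, hL, hM⟩ := Submonoid.exists_list_of_mem_closure (toeplitzProducts.mem M)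
  exact Nat.sInf_mem (s := {s | ∃ L : List (Matrix (Fin n) (Fin n) ℂ),
    L.length = s ∧ (∀ T ∈ L, IsToeplitz T) ∧ L.prod = M}) ⟨L.length, L, rfl, hL, hM⟩

theorem toepNum_mul_le {n : ℕ} (P T₁ T₂ : Matrix (Fin n) (Fin n) ℂ) (h₁ : IsToeplitz T₁)
    (h₂ : IsToeplitz T₂) : ToepNum (P * T₁ * T₂) ≤ ToepNum P + 2 := by
  obtain ⟨L, hL, hT, hP⟩ := exists_toeplitz_list_length_eq_toepNum P
  refine Nat.sInf_le ⟨L ++ [T₁, T₂], by simp [hL], ?_, by simp [hP, mul_assoc]⟩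
  simp only [List.mem_append, List.mem_cons, List.not_mem_nil, or_false]
  rintro T (h | rfl | rfl)
  exacts [hT T h, h₁, h₂]

section Factorization

open Matrix

variable {n : ℕ}

/-- The nilpotent shift sending each basis vector to the next one. -/
def lowerShift (n : ℕ) : Matrix (Fin n) (Fin n) ℂ :=
  of fun i j => if (i : ℕ) = j + 1 then 1 else 0

theorem mul_lowerShift_apply (A : Matrix (Fin n) (Fin n) ℂ) (i j : Fin n) :
    (A * lowerShift n) i j = if h : (j : ℕ) + 1 < n then A i ⟨j + 1, h⟩ else 0 := by
  split_ifs with h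
  · rw [mul_apply, Finset.sum_eq_single ⟨j + 1, h⟩]
    · simp [lowerShift]
    · intro b _ hb
      exact mul_eq_zero_of_right _ (if_neg fun h => hb (Fin.ext h))
    · simp
  · rw [mul_apply]
    refine Finset.sum_eq_zero fun b _ => ?_
    have : (b : ℕ) ≠ j + 1 := by omega
    simp [lowerShift, this]

theorem lowerShift_mul_apply (A : Matrix (Fin n) (Fin n) ℂ) (i j : Fin n) :
    (lowerShift n * A) i j = if (i : ℕ) = 0 then 0 else A ⟨i - 1, by omega⟩ j := by
  split_ifs with h
  · rw [mul_apply]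
    exact Finset.sum_eq_zero fun b _ => by simp [lowerShift, h]
  · rw [mul_apply, Finset.sum_eq_single ⟨i - 1, by omega⟩]
    · have : (i : ℕ) = i - 1 + 1 := by omega
      simp [lowerShift, ← this]
    · intro b _ hb
      have : (i : ℕ) ≠ b + 1 := fun h => hb (by simp [h])
      simp [lowerShift, this]
    · simp

theorem IsToeplitz.of_commute_lowerShift {A : Matrix (Fin n) (Fin n) ℂ}
    (h : Commute A (lowerShift n)) : IsToeplitz A := fun i j hi hj => by
  have := congr_fun₂ h.eq ⟨i + 1, hi⟩ j
  rw [mul_lowerShift_apply, lowerShift_mul_apply, dif_pos hj] at this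
  simpa using this.symm

/-- The lower triangular Toeplitz matrix with first column given by the sequence `a`. -/
def lowerToeplitz (n : ℕ) (a : ℕ → ℂ) : Matrix (Fin n) (Fin n) ℂ :=
  of fun i j => if (j : ℕ) ≤ i then a (i - j) else 0

theorem commute_lowerToeplitz_lowerShift (a : ℕ → ℂ) :
    Commute (lowerToeplitz n a) (lowerShift n) := by
  ext i j
  rw [mul_lowerShift_apply, lowerShift_mul_apply]
  simp only [lowerToeplitz, of_apply]
  split_ifs <;> first | rfl | omega | (congr 1; omega)

theorem isUnit_lowerToeplitz {a : ℕ → ℂ} (ha : a 0 ≠ 0) : IsUnit (lowerToeplitz n a) := by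
  rw [isUnit_iff_isUnit_det, det_of_isLowerTriangular]
  · simp [lowerToeplitz, ha]
  · intro i j hij
    exact if_neg (not_le.2 (Fin.lt_def.1 (OrderDual.toDual_lt_toDual.1 hij)))

theorem exists_isToeplitz_mulVec_single {v : Fin n → ℂ} (hv : v ≠ 0) :
    ∃ (k : Fin n) (A : Matrix (Fin n) (Fin n) ℂ),
      IsUnit A ∧ IsToeplitz A⁻¹ ∧ A.col k = v := by
  have hex : ∃ i, ∃ h : i < n, v ⟨i, h⟩ ≠ 0 := by
    obtain ⟨i, hi⟩ := Function.ne_iff.1 hv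
    exact ⟨i, i.2, hi⟩
  classical
  obtain ⟨hk, hvk⟩ := Nat.find_spec hex
  have hmin := fun i => Nat.find_min (H := hex) (m := i)
  generalize Nat.find hex = k at hk hvk hmin
  let a : ℕ → ℂ := fun i => if h : k + i < n then v ⟨k + i, h⟩ else 0
  have hA : IsUnit (lowerToeplitz n a) := isUnit_lowerToeplitz (by simpa [a, hk] using hvk)
  refine ⟨⟨k, hk⟩, lowerToeplitz n a, hA, .of_commute_lowerShift ?_, ?_⟩
  · have := (commute_lowerToeplitz_lowerShift (n := n) a).symm
    lift lowerToeplitz n a to (Matrix (Fin n) (Fin n) ℂ)ˣ using hA with U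
    rw [← coe_units_inv]
    exact this.symm.units_inv_left
  · ext i
    simp only [col_apply, lowerToeplitz, of_apply, a]
    split_ifs with h1 h2
    · congr 1; simp [Fin.ext_iff]; omega
    · omega
    · by_contra hne
      exact hmin i (by omega) ⟨i.2, Ne.symm hne⟩

/-- A Toeplitz partial permutation matrix whose only zero column is the `k`-th one. -/
def wrapToeplitz (k : Fin n) : Matrix (Fin n) (Fin n) ℂ :=
  of fun i j => if (i : ℕ) + k + 1 = j ∨ (i : ℕ) + k = j + n then 1 else 0

theorem isToeplitz_wrapToeplitz (k : Fin n) : IsToeplitz (wrapToeplitz k) := fun i j hi hj => by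
  simp only [wrapToeplitz, of_apply]
  congr 1
  simp only [eq_iff_iff]
  omega

theorem wrapToeplitz_rev_apply (k j : Fin n) : wrapToeplitz k k.rev j = 0 := by
  simp only [wrapToeplitz, of_apply, Fin.val_rev]
  exact if_neg (by omega)

theorem transpose_mul_wrapToeplitz (k : Fin n) :
    (wrapToeplitz k)ᵀ * wrapToeplitz k = diagonal fun i => if i = k then 0 else 1 := by
  ext a b
  simp only [mul_apply, transpose_apply, diagonal_apply, wrapToeplitz, of_apply]
  by_cases hab : a = b
  · subst hab
    rw [if_pos rfl]
    split_ifs with hak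
    · subst hak
      exact Finset.sum_eq_zero fun i _ => by rw [if_neg (by omega), zero_mul]
    · have hak' : (a : ℕ) ≠ k := fun h => hak (Fin.ext h)
      obtain ⟨r, hr⟩ : ∃ r : Fin n, (r : ℕ) + k + 1 = a ∨ (r : ℕ) + k = a + n := by
        rcases Nat.lt_or_gt_of_ne hak' with h | h
        · exact ⟨⟨a + n - k, by omega⟩, Or.inr (by simp; omega)⟩
        · exact ⟨⟨a - k - 1, by omega⟩, Or.inl (by simp; omega)⟩
      rw [Finset.sum_eq_single r, if_pos hr, one_mul]
      · intro i _ hi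
        have : (i : ℕ) ≠ r := fun h => hi (Fin.ext h)
        rw [if_neg (by omega), zero_mul]
      · simp
  · rw [if_neg hab]
    have hab' : (a : ℕ) ≠ b := fun h => hab (Fin.ext h)
    refine Finset.sum_eq_zero fun i _ => ?_
    split_ifs <;> first | omega | simp

theorem exists_isUnit_updateCol {ι K : Type*} [Fintype ι] [DecidableEq ι] [Field K]
    {A : Matrix ι ι K} (hA : A.rank + 1 = Fintype.card ι) {r : ι} (hr : A.col r = 0) :
    ∃ w, IsUnit (A.updateCol r w) := by
  have hne : LinearMap.range A.mulVecLin ≠ ⊤ := by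
    intro h
    have : A.rank = Fintype.card ι := by
      rw [Matrix.rank, h, finrank_top, Module.finrank_fintype_fun_eq_card]
    omega
  obtain ⟨w, hw⟩ : ∃ w, w ∉ LinearMap.range A.mulVecLin := by
    by_contra! h
    exact hne (Submodule.eq_top_iff'.2 h)
  refine ⟨w, ?_⟩
  have hlt : LinearMap.range A.mulVecLin < LinearMap.range (A.updateCol r w).mulVecLin := by
    rw [range_mulVecLin, range_mulVecLin] at *
    refine lt_of_le_of_ne (Submodule.span_le.2 ?_) ?_
    · rintro _ ⟨j, rfl⟩
      by_cases hj : j = r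
      · subst hj; rw [hr]; exact zero_mem _
      · refine Submodule.subset_span ⟨j, ?_⟩
        ext i; simp [hj]
    · intro h
      rw [h] at hw
      exact hw (Submodule.subset_span ⟨r, by ext i; simp⟩)
  have h1 := Submodule.finrank_lt_finrank_of_lt hlt
  have h2 := (A.updateCol r w).rank_le_card_width
  change A.rank < (A.updateCol r w).rank at h1
  rw [← linearIndependent_cols_iff_isUnit, linearIndependent_iff_card_eq_finrank_span,
    Set.finrank, ← rank_eq_finrank_span_cols]
  omega

theorem exists_eq_isUnit_mul_toeplitz_mul_toeplitz (M : Matrix (Fin n) (Fin n) ℂ)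
    (hM : M.rank + 1 = n) :
    ∃ P T₁ T₂ : Matrix (Fin n) (Fin n) ℂ,
      IsUnit P ∧ IsToeplitz T₁ ∧ IsToeplitz T₂ ∧ M = P * T₁ * T₂ := by
  obtain ⟨v, hv, hMv⟩ : ∃ v ≠ 0, M *ᵥ v = 0 := by
    rw [exists_mulVec_eq_zero_iff]
    by_contra h
    have := rank_of_isUnit M ((isUnit_iff_isUnit_det M).2 (isUnit_iff_ne_zero.2 h))
    simp at this
    omega
  obtain ⟨k, A, hA, hA', rfl⟩ := exists_isToeplitz_mulVec_single hv
  have hdet := (isUnit_iff_isUnit_det A).1 hA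
  have hMA : M * A * (wrapToeplitz k)ᵀ * wrapToeplitz k = M * A := by
    rw [mul_assoc, transpose_mul_wrapToeplitz]
    ext i j
    rw [mul_diagonal]
    split_ifs with h
    · subst h
      rw [mul_zero]
      exact (congr_fun hMv i).symm
    · rw [mul_one]
  have hrank : (M * A * (wrapToeplitz k)ᵀ).rank = M.rank := by
    refine le_antisymm ((rank_mul_le_left _ _).trans (rank_mul_le_left _ _)) ?_
    rw [← rank_mul_eq_left_of_isUnit_det A M hdet, ← hMA]
    exact (rank_mul_le_left _ _).trans (by rw [hMA])
  have hcol : (M * A * (wrapToeplitz k)ᵀ).col k.rev = 0 := by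
    ext i
    rw [col_apply, mul_apply]
    exact Finset.sum_eq_zero fun j _ => by
      rw [transpose_apply, wrapToeplitz_rev_apply, mul_zero]
  obtain ⟨w, hw⟩ := exists_isUnit_updateCol (by rw [hrank, Fintype.card_fin, hM]) hcol
  refine ⟨_, wrapToeplitz k, A⁻¹, hw, isToeplitz_wrapToeplitz k, hA', ?_⟩
  have hPT : (M * A * (wrapToeplitz k)ᵀ).updateCol k.rev w * wrapToeplitz k = M * A := by
    rw [← hMA]
    ext i j
    rw [mul_apply, mul_apply]
    refine Finset.sum_congr rfl fun l _ => ?_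
    by_cases hl : l = k.rev
    · rw [hl, wrapToeplitz_rev_apply, mul_zero, mul_zero]
    · rw [updateCol_ne hl, hMA]
  rw [hPT, mul_nonsing_inv_cancel_right _ _ hdet]

end Factorization

theorem rank_n_sub_one_toepnum_bound {n : ℕ}
    (yeLim : ∀ P : Matrix (Fin n) (Fin n) ℂ, IsUnit P → ToepNum P ≤ 2 * (n / 2) + 2)
    (M : Matrix (Fin n) (Fin n) ℂ) (hM : M.rank = n - 1) :
    ToepNum M ≤ 2 * (n / 2) + 4 := by
  rcases Nat.eq_zero_or_pos n with rfl | hn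
  · rw [Subsingleton.elim M 1]
    exact (yeLim 1 isUnit_one).trans (by omega)
  · obtain ⟨P, T₁, T₂, hP, h₁, h₂, rfl⟩ :=
      exists_eq_isUnit_mul_toeplitz_mul_toeplitz M (by omega)
    have := toepNum_mul_le P T₁ T₂ h₁ h₂
    have := yeLim P hP
    omega
end
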